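/- Let d ≥ 1, D ≥ 2 and e be integers with 1 ≤ e ≤ D and e ∣ D, and let A ⊆ ℕ^d be a finite set such that 0 ∈ A, Dεᵢ ∈ A for all 1 ≤ i ≤ d, and |a| ≤ D for every a ∈ A. Then the following are equivalent: (i) e ∣ |a| for every a ∈ A, the vectors (D−1)εᵢ + ε_j belong to A for all 1 ≤ i, j ≤ d, the vectors (D−e)εᵢ belong to A for all 1 ≤ i ≤ d, and if e = 1 then there exists j ∈ {1, …, d} with ε_j ∉ A; (ii) there exist a finite set H ⊆ ℕ_e^d, with H nonempty if e = 1, and a number s₀ ∈ ℕ such that sA = Δ_{s,e} \ H for all s ≥ s₀. -/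

import Mathlib

open Pointwise

/-- The `s`-fold sumset of `A`: `0A = {0}` and `(s+1)A = A + sA`. -/
def sumset {M : Type*} [AddMonoid M] (A : Set M) : ℕ → Set M
  | 0 => {0}
  | s + 1 => A + sumset A s

/-- `ℕ_e^d = {y ∈ ℕ^d : e ∣ |y|}`. -/
def NatE (d e : ℕ) : Set (Fin d → ℕ) := {y | e ∣ ∑ j, y j}

/-- `Δ_{s,e} = {y ∈ ℕ_e^d : |y| ≤ sD}`. -/
def DeltaE (d D e s : ℕ) : Set (Fin d → ℕ) := {y | e ∣ ∑ j, y j ∧ ∑ j, y j ≤ s * D}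

/-- The hole set `H = ℕ_e^d \ ⟨A⟩`, where `⟨A⟩` is the additive submonoid generated by `A`. -/
def Holes (d e : ℕ) (A : Set (Fin d → ℕ)) : Set (Fin d → ℕ) :=
  NatE d e \ (AddSubmonoid.closure A : Set (Fin d → ℕ))

/-- The set `{0, Dε₁, …, Dε_d}`. -/
def Erays (d D : ℕ) : Set (Fin d → ℕ) :=
  insert 0 (Set.range fun i : Fin d => Pi.single i D)

/-- `A ⊆ ℕ^d` is of one-singular-point type for `D` and `e`: every `a ∈ A` satisfies
`|a| ≤ D` and `e ∣ |a|`, and `A` contains `0`, the vectors `(D-1)εᵢ + εⱼ` for all `i, j`,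
and the vectors `(D-e)εᵢ` for all `i`. -/
def OneSingType (d D e : ℕ) (A : Set (Fin d → ℕ)) : Prop :=
  (∀ a ∈ A, ∑ j, a j ≤ D ∧ e ∣ ∑ j, a j) ∧
  (0 : Fin d → ℕ) ∈ A ∧
  (∀ i j : Fin d, Pi.single i (D - 1) + Pi.single j 1 ∈ A) ∧
  (∀ i : Fin d, Pi.single i (D - e) ∈ A)

/-!
Let `m = |y|` be divisible by `e` and suppose that some coordinate `yᵢ` is large. Let `N` be the
least number with `m ≤ N D`, and write `N D = m + v e`. Removing `v` copies of `(D - e)εᵢ` from `y`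
leaves a vector of degree `(N - v) D`, and such a vector is a sum of vectors `D εⱼ` and
`(D - 1)εᵢ + εⱼ`, which all have degree `D`, so exactly `N - v` of them are used. Hence `y ∈ sA` as
soon as `|y| ≤ s D`, and only the finitely many `y` with all coordinates small can be missing.

Conversely, `(D - 1)εᵢ + εⱼ` and `(D - e)εᵢ` are recovered from `sD εᵢ - εᵢ + εⱼ` and
`sD εᵢ - e εᵢ` in `sA`: some summand involves `εⱼ`, respectively has degree not divisible by `D`,
and as the other summands have degree at most `D`, this summand has the required degree.
Finally `H` is necessarily `ℕ_e^d \ ⟨A⟩`, which for `e = 1` is empty if and only if every `εⱼ`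
lies in `A`.
-/

section Sumset

variable {M : Type*} [AddMonoid M] {A : Set M}

theorem sumset_eq_nsmul (A : Set M) (s : ℕ) : sumset A s = s • A := by
  induction s with
  | zero => rw [zero_nsmul]; rfl
  | succ s ih => rw [succ_nsmul', ← ih]; rfl

theorem add_mem_sumset {s t : ℕ} {x y : M}
    (hx : x ∈ sumset A s) (hy : y ∈ sumset A t) : x + y ∈ sumset A (s + t) := by
  rw [sumset_eq_nsmul] at hx hy ⊢
  exact add_nsmul A s t ▸ Set.add_mem_add hx hy

theorem nsmul_mem_sumset {a : M} (ha : a ∈ A) (n : ℕ) :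
    n • a ∈ sumset A n :=
  sumset_eq_nsmul A n ▸ Set.nsmul_mem_nsmul ha

theorem monotone_sumset (h0 : 0 ∈ A) :
    Monotone (sumset A) := fun s t hst ↦ by
  simpa only [sumset_eq_nsmul] using Set.nsmul_subset_nsmul_right h0 hst

theorem subset_sumset (h0 : 0 ∈ A) {s : ℕ} (hs : 1 ≤ s) :
    A ⊆ sumset A s := by
  simpa only [sumset_eq_nsmul, one_nsmul] using monotone_sumset h0 hs

theorem coe_closure_eq_iUnion_sumset (A : Set M) :
    (AddSubmonoid.closure A : Set M) = ⋃ s, sumset A s := by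
  ext x
  rw [SetLike.mem_coe, Set.mem_iUnion]
  constructor
  · intro hx
    induction hx using AddSubmonoid.closure_induction with
    | mem a ha => exact ⟨1, by simpa using nsmul_mem_sumset ha 1⟩
    | zero => exact ⟨0, rfl⟩
    | add x y _ _ hx hy =>
      obtain ⟨s, hs⟩ := hx
      obtain ⟨t, ht⟩ := hy
      exact ⟨s + t, add_mem_sumset hs ht⟩
  · rintro ⟨s, hs⟩
    induction s generalizing x with
    | zero => exact hs ▸ zero_mem _
    | succ s ih =>
      obtain ⟨a, ha, y, hy, rfl⟩ := hs
      exact add_mem (AddSubmonoid.subset_closure ha) (ih y hy)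

theorem sumset_subset_closure (A : Set M) (s : ℕ) :
    sumset A s ⊆ AddSubmonoid.closure A :=
  coe_closure_eq_iUnion_sumset A ▸ Set.subset_iUnion _ s

theorem exists_subset_sumset_of_finite {S : Set M} (h0 : 0 ∈ A)
    (hS : S.Finite) (hSA : S ⊆ AddSubmonoid.closure A) : ∃ s, S ⊆ sumset A s := by
  rw [coe_closure_eq_iUnion_sumset] at hSA
  lift S to Finset M using hS
  exact (monotone_sumset h0).directed_le.exists_mem_subset_of_finset_subset_biUnion hSA

theorem exists_not_add_eq_of_mem_sumset {M : Type*} [AddCommMonoid M] {A : Set M} {p : M → Prop}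
    (hp : ∀ x y, p x → p y → p (x + y)) {s : ℕ} {x : M} (hx : x ∈ sumset A (s + 1))
    (hpx : ¬p x) : ∃ a ∈ A, ¬p a ∧ ∃ y ∈ sumset A s, a + y = x := by
  induction s generalizing x with
  | zero =>
    obtain ⟨a, ha, y, rfl, rfl⟩ := hx
    exact ⟨a, ha, by simpa using hpx, 0, rfl, rfl⟩
  | succ s ih =>
    obtain ⟨a, ha, x', hx', rfl⟩ := hx
    by_cases hpa : p a
    · obtain ⟨b, hb, hpb, y, hy, rfl⟩ := ih hx' fun hpx' ↦ hpx (hp a x' hpa hpx')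
      exact ⟨b, hb, hpb, a + y, ⟨a, ha, y, hy, rfl⟩, add_left_comm b a y⟩
    · exact ⟨a, ha, hpa, x', hx', rfl⟩

end Sumset

section Vectors

variable {ι : Type*} {A : Set (ι → ℕ)} {D e : ℕ}

theorem single_one_mem_of_mem_closure [DecidableEq ι] {j : ι}
    (hj : Pi.single j 1 ∈ AddSubmonoid.closure A) : Pi.single j 1 ∈ A := by
  rw [← SetLike.mem_coe, coe_closure_eq_iUnion_sumset, Set.mem_iUnion] at hj
  obtain ⟨_ | s, hs⟩ := hj
  · exact absurd hs (by simp [sumset])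
  obtain ⟨a, ha, haj, y, -, hay⟩ := exists_not_add_eq_of_mem_sumset (p := fun x ↦ x j = 0)
    (by simp +contextual) hs (by simp)
  convert ha
  funext k
  have hk := congrFun hay k
  rw [Pi.add_apply] at hk
  obtain rfl | hkj := eq_or_ne k j
  · rw [Pi.single_eq_same] at hk ⊢
    omega
  · rw [Pi.single_eq_of_ne hkj] at hk ⊢
    omega

theorem exists_add_single_add_nsmul_single_eq [DecidableEq ι] {y : ι → ℕ} {i : ι} {n v c : ℕ}
    (hy : y i = n + v * c) : ∃ x : ι → ℕ, x + Pi.single i n + v • Pi.single i c = y := by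
  refine ⟨Function.update y i 0, ?_⟩
  rw [add_assoc, ← Pi.single_smul, smul_eq_mul, ← Pi.single_add, ← hy]
  ext k
  obtain rfl | hk := eq_or_ne k i <;> simp [*]

theorem nsmul_mem_of_forall_single_mem [Finite ι] [DecidableEq ι]
    {P : AddSubmonoid (ι → ℕ)} {c : ℕ} (hP : ∀ j, Pi.single j c ∈ P) (q : ι → ℕ) : c • q ∈ P := by
  have := Fintype.ofFinite ι
  have hq : c • q = ∑ j, q j • Pi.single j c := by
    ext k
    simp [Finset.sum_apply, Pi.single_apply, mul_comm]
  exact hq ▸ sum_mem fun j _ ↦ nsmul_mem (hP j) (q j)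

variable [Fintype ι]

theorem finite_setOf_sum_le (n : ℕ) : {y : ι → ℕ | ∑ j, y j ≤ n}.Finite := by
  classical
  exact (Set.finite_Icc 0 fun _ ↦ n).subset fun y hy ↦
    ⟨zero_le, fun k ↦ (Finset.single_le_sum_of_canonicallyOrdered (Finset.mem_univ k)).trans hy⟩

theorem sum_le_of_mem_sumset (hle : ∀ a ∈ A, ∑ j, a j ≤ D) {s : ℕ} {x : ι → ℕ}
    (hx : x ∈ sumset A s) : ∑ j, x j ≤ s * D := by
  induction s generalizing x with
  | zero => obtain rfl : x = 0 := hx; simp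
  | succ s ih =>
    obtain ⟨a, ha, y, hy, rfl⟩ := hx
    simp only [Pi.add_apply, Finset.sum_add_distrib, add_one_mul]
    linarith [hle a ha, ih hy]

theorem dvd_sum_of_mem_closure (hdvd : ∀ a ∈ A, e ∣ ∑ j, a j) {x : ι → ℕ}
    (hx : x ∈ AddSubmonoid.closure A) : e ∣ ∑ j, x j := by
  induction hx using AddSubmonoid.closure_induction with
  | mem a ha => exact hdvd a ha
  | zero => simp
  | add x y _ _ hx hy =>
    simpa only [Pi.add_apply, Finset.sum_add_distrib] using dvd_add hx hy

theorem mem_sumset_of_mem_closure_sum_eq (hD : 0 < D) {s : ℕ} {x : ι → ℕ}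
    (hx : x ∈ AddSubmonoid.closure {a ∈ A | ∑ j, a j = D}) (hxs : ∑ j, x j = s * D) :
    x ∈ sumset A s := by
  suffices h : ∃ t, x ∈ sumset A t ∧ ∑ j, x j = t * D by
    obtain ⟨t, hxt, hsum⟩ := h
    exact Nat.eq_of_mul_eq_mul_right hD (hsum.symm.trans hxs) ▸ hxt
  clear hxs
  induction hx using AddSubmonoid.closure_induction with
  | mem a ha => exact ⟨1, by simpa using nsmul_mem_sumset ha.1 1, by simpa using ha.2⟩
  | zero => exact ⟨0, rfl, by simp⟩
  | add x y _ _ hx hy =>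
    obtain ⟨s, hxs, hs⟩ := hx
    obtain ⟨t, hyt, ht⟩ := hy
    exact ⟨s + t, add_mem_sumset hxs hyt,
      by simp only [Pi.add_apply, Finset.sum_add_distrib, hs, ht, add_mul]⟩

theorem eq_of_sum_eq_of_forall_ne {x y : ι → ℕ} (i : ι) (hsum : ∑ j, x j = ∑ j, y j)
    (hne : ∀ k ≠ i, x k = y k) : x = y := by
  classical
  funext k
  obtain rfl | hk := eq_or_ne k i
  · rw [Fintype.sum_eq_add_sum_compl k, Fintype.sum_eq_add_sum_compl k,
      Finset.sum_congr rfl fun j hj ↦ hne j (by simpa using hj)] at hsum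
    exact Nat.add_right_cancel hsum
  · exact hne k hk

theorem exists_mul_lt_and_add_mul_eq_mul {m : ℕ} (hD : 0 < D) (hdvd : e ∣ D) (hem : e ∣ m) :
    ∃ v N, e * v < D ∧ m + e * v = N * D := by
  set N := (m + (D - 1)) / D
  have hlt : m + (D - 1) < N * D + D := Nat.lt_div_mul_add hD
  have hle : N * D ≤ m + (D - 1) := Nat.div_mul_le_self _ D
  obtain ⟨v, hv⟩ := Nat.dvd_sub (hdvd.mul_left N) hem
  exact ⟨v, N, by omega, by omega⟩

variable [DecidableEq ι]

theorem add_single_sum_mul_mem {P : AddSubmonoid (ι → ℕ)} {c : ℕ} {i : ι}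
    (hP : ∀ j, Pi.single i c + Pi.single j 1 ∈ P) (r : ι → ℕ) :
    r + Pi.single i ((∑ j, r j) * c) ∈ P := by
  have hr : r + Pi.single i ((∑ j, r j) * c) = ∑ j, r j • (Pi.single i c + Pi.single j 1) := by
    ext k
    simp [Finset.sum_apply, Pi.single_apply, Finset.sum_add_distrib, Finset.sum_mul, add_comm]
  exact hr ▸ sum_mem fun j _ ↦ nsmul_mem (hP j) (r j)

-- With `x = D • q + r` the division with remainder, `x + n εᵢ` is
-- `D • q + (r + |r| (D - 1) εᵢ) + (n - |r| (D - 1)) εᵢ`, and the last coefficient is a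
-- multiple of `D`.
theorem add_single_mem_of_dvd_of_le {P : AddSubmonoid (ι → ℕ)} {i : ι} (hD : 0 < D)
    (hP : ∀ j k, Pi.single j (D - 1) + Pi.single k 1 ∈ P) {x : ι → ℕ} {n : ℕ}
    (hdvd : D ∣ ∑ j, x j + n) (hn : Fintype.card ι * D * D ≤ n) : x + Pi.single i n ∈ P := by
  have hDP (j : ι) : Pi.single j D ∈ P := by
    simpa only [← Pi.single_add, Nat.sub_add_cancel hD] using hP j j
  set q : ι → ℕ := fun j ↦ x j / D
  set r : ι → ℕ := fun j ↦ x j % D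
  have hx : x = D • q + r := funext fun j ↦ (Nat.div_add_mod (x j) D).symm
  have hr : ∑ j, r j ≤ Fintype.card ι * D := by
    simpa using Finset.sum_le_card_nsmul Finset.univ r D fun j _ ↦ (Nat.mod_lt _ hD).le
  obtain ⟨m, hm⟩ : ∃ m, n = (∑ j, r j) * (D - 1) + m :=
    Nat.exists_eq_add_of_le ((Nat.mul_le_mul hr (Nat.sub_le D 1)).trans hn)
  obtain ⟨t, rfl⟩ : D ∣ m := by
    have hsum : ∑ j, x j + n = D * (∑ j, q j + ∑ j, r j) + m := by
      rw [hx, hm]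
      simp only [Pi.add_apply, Pi.smul_apply, smul_eq_mul, Finset.sum_add_distrib,
        ← Finset.mul_sum]
      obtain ⟨D, rfl⟩ := Nat.exists_eq_add_of_le' hD
      simp only [Nat.add_sub_cancel]
      ring
    exact (Nat.dvd_add_right (dvd_mul_right _ _)).1 (hsum ▸ hdvd)
  have hdecomp : x + Pi.single i n =
      D • (q + Pi.single i t) + (r + Pi.single i ((∑ j, r j) * (D - 1))) := by
    rw [hm, Pi.single_add, ← smul_eq_mul D t, Pi.single_smul, smul_add]
    nth_rw 1 [hx]
    abel
  rw [hdecomp]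
  exact add_mem (nsmul_mem_of_forall_single_mem hDP _) (add_single_sum_mul_mem (hP i) r)

theorem mem_sumset_of_le_apply (hD : 0 < D) (hdvd : e ∣ D) (h0 : 0 ∈ A)
    (hA₁ : ∀ i j, Pi.single i (D - 1) + Pi.single j 1 ∈ A) (hA₂ : ∀ i, Pi.single i (D - e) ∈ A)
    {y : ι → ℕ} {i : ι} (hi : Fintype.card ι * D * D + D * D ≤ y i) (hey : e ∣ ∑ j, y j) {s : ℕ}
    (hys : ∑ j, y j ≤ s * D) : y ∈ sumset A s := by
  have he : 0 < e := Nat.pos_of_dvd_of_pos hdvd hD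
  have heD : e ≤ D := Nat.le_of_dvd hD hdvd
  obtain ⟨v, N, hvD, hvN⟩ := exists_mul_lt_and_add_mul_eq_mul hD hdvd hey
  have hNs : N ≤ s := by
    have : N * D < (s + 1) * D := by rw [add_one_mul]; omega
    exact Nat.le_of_lt_succ (Nat.lt_of_mul_lt_mul_right this)
  have hv : v * (D - e) ≤ D * D :=
    Nat.mul_le_mul ((Nat.le_mul_of_pos_left v he).trans hvD.le) (Nat.sub_le D e)
  obtain ⟨n, hn⟩ : ∃ n, y i = n + v * (D - e) := Nat.exists_eq_add_of_le' (by omega)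
  obtain ⟨x, hx⟩ := exists_add_single_add_nsmul_single_eq hn
  have hsum : ∑ j, x j + n + v * D = N * D := by
    have hy : ∑ j, x j + n + v * (D - e) = ∑ j, y j := by
      simp [← hx, Finset.sum_add_distrib, ← Finset.mul_sum]
    rw [← hvN, ← hy, mul_comm e v, add_assoc _ (v * (D - e)), ← mul_add, Nat.sub_add_cancel heD]
  obtain ⟨k, hk⟩ : D ∣ ∑ j, x j + n :=
    (Nat.dvd_add_left (dvd_mul_left D v)).1 (hsum ▸ dvd_mul_left D N)
  have hkv : k + v = N :=
    Nat.eq_of_mul_eq_mul_right hD (by rw [add_mul, mul_comm k, ← hk, hsum])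
  have hP (j l : ι) : Pi.single j (D - 1) + Pi.single l 1 ∈
      AddSubmonoid.closure {a ∈ A | ∑ j, a j = D} :=
    AddSubmonoid.subset_closure
      ⟨hA₁ j l, by simp [Finset.sum_add_distrib, Nat.sub_add_cancel hD]⟩
  have hxk : x + Pi.single i n ∈ sumset A k :=
    mem_sumset_of_mem_closure_sum_eq hD (add_single_mem_of_dvd_of_le hD hP ⟨k, hk⟩ (by omega))
      (by simp [Finset.sum_add_distrib, hk, mul_comm])
  exact hx ▸ monotone_sumset h0 (hkv.trans_le hNs) (add_mem_sumset hxk (nsmul_mem_sumset (hA₂ i) v))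

theorem single_add_single_mem_of_mem_sumset (hD : 0 < D) (hle : ∀ a ∈ A, ∑ j, a j ≤ D) {s : ℕ}
    {i j : ι} (hx : Pi.single i (s * D + (D - 1)) + Pi.single j 1 ∈ sumset A (s + 1)) :
    Pi.single i (D - 1) + Pi.single j 1 ∈ A := by
  obtain ⟨a, ha, haj, y, hy, hay⟩ := exists_not_add_eq_of_mem_sumset (p := fun x ↦ x j = 0)
    (by simp +contextual) hx (by simp)
  have hsum : ∑ k, a k + ∑ k, y k = s * D + D := by
    rw [← Finset.sum_add_distrib]
    simpa [Finset.sum_add_distrib, add_assoc, Nat.sub_add_cancel hD]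
      using congrArg (∑ k, · k) hay
  have haD : ∑ k, a k = D := by linarith [hle a ha, sum_le_of_mem_sumset hle hy]
  convert ha
  refine eq_of_sum_eq_of_forall_ne i ?_ fun k hki ↦ ?_
  · simp [Finset.sum_add_distrib, Nat.sub_add_cancel hD, haD]
  · have hk := congrFun hay k
    simp only [Pi.add_apply, Pi.single_eq_of_ne hki, zero_add] at hk ⊢
    obtain rfl | hkj := eq_or_ne k j
    · rw [Pi.single_eq_same] at hk ⊢
      omega
    · rw [Pi.single_eq_of_ne hkj] at hk ⊢
      omega

theorem single_sub_mem_of_mem_sumset (hD : 0 < D) (hdvd : e ∣ D) (h0 : 0 ∈ A)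
    (hle : ∀ a ∈ A, ∑ j, a j ≤ D) (hA : ∀ a ∈ A, e ∣ ∑ j, a j) {s : ℕ} {i : ι}
    (hx : Pi.single i (s * D + (D - e)) ∈ sumset A (s + 1)) : Pi.single i (D - e) ∈ A := by
  have he : 0 < e := Nat.pos_of_dvd_of_pos hdvd hD
  obtain rfl | heD := (Nat.le_of_dvd hD hdvd).eq_or_lt
  · simpa using h0
  obtain ⟨a, ha, haD, y, hy, hay⟩ := exists_not_add_eq_of_mem_sumset (p := fun x ↦ D ∣ ∑ j, x j)
    (fun x y hx hy ↦ by simpa [Finset.sum_add_distrib] using dvd_add hx hy) hx (by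
      rw [Fintype.sum_pi_single', Nat.dvd_add_right (dvd_mul_left D s)]
      exact Nat.not_dvd_of_pos_of_lt (by omega) (by omega))
  have hsum : ∑ k, a k + ∑ k, y k = s * D + (D - e) := by
    rw [← Finset.sum_add_distrib]
    simpa using congrArg (∑ k, · k) hay
  have hae : ∑ k, a k = D - e := by
    have hlt : ∑ k, a k < D := (hle a ha).lt_of_ne fun h ↦ haD h.symm.dvd
    have hgap : e ≤ D - ∑ k, a k := Nat.le_of_dvd (by omega) (Nat.dvd_sub hdvd (hA a ha))
    have := sum_le_of_mem_sumset hle hy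
    omega
  convert ha
  refine eq_of_sum_eq_of_forall_ne i (by simp [hae]) fun k hki ↦ ?_
  have hk := congrFun hay k
  rw [Pi.add_apply, Pi.single_eq_of_ne hki] at hk
  rw [Pi.single_eq_of_ne hki]
  omega

end Vectors

section Holes

variable {d D e : ℕ} {A : Set (Fin d → ℕ)}

theorem nonempty_holes_one_iff : (Holes d 1 A).Nonempty ↔ ∃ j, Pi.single j 1 ∉ A := by
  constructor
  · contrapose!
    intro hA
    refine Set.sdiff_eq_empty.2 fun y _ ↦ ?_
    simpa using nsmul_mem_of_forall_single_mem (fun j ↦ AddSubmonoid.subset_closure (hA j)) y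
  · rintro ⟨j, hj⟩
    exact ⟨Pi.single j 1, one_dvd _, fun h ↦ hj (single_one_mem_of_mem_closure h)⟩

theorem OneSingType.exists_bound_forall_mem_sumset (hA : OneSingType d D e A) (hD : 0 < D)
    (hdvd : e ∣ D) :
    ∃ m, ∀ y : Fin d → ℕ, m < ∑ j, y j → ∀ s, y ∈ DeltaE d D e s → y ∈ sumset A s := by
  obtain ⟨-, h0, hA₁, hA₂⟩ := hA
  refine ⟨∑ _ : Fin d, (Fintype.card (Fin d) * D * D + D * D), fun y hy s hys ↦ ?_⟩
  obtain ⟨i, -, hi⟩ := Finset.exists_lt_of_sum_lt hy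
  exact mem_sumset_of_le_apply hD hdvd h0 hA₁ hA₂ hi.le hys.1 hys.2

theorem OneSingType.finite_holes (hA : OneSingType d D e A) (hD : 0 < D) (hdvd : e ∣ D) :
    (Holes d e A).Finite := by
  obtain ⟨m, hm⟩ := hA.exists_bound_forall_mem_sumset hD hdvd
  refine (finite_setOf_sum_le m).subset fun y ⟨hye, hycl⟩ ↦ ?_
  by_contra hlt
  exact hycl (sumset_subset_closure A _
    (hm y (not_le.1 hlt) (∑ j, y j) ⟨hye, Nat.le_mul_of_pos_right _ hD⟩))

theorem OneSingType.exists_forall_ge_sumset_eq (hA : OneSingType d D e A) (hD : 0 < D)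
    (hdvd : e ∣ D) : ∃ s₀, ∀ s ≥ s₀, sumset A s = DeltaE d D e s \ Holes d e A := by
  obtain ⟨m, hm⟩ := hA.exists_bound_forall_mem_sumset hD hdvd
  obtain ⟨s₀, hs₀⟩ := exists_subset_sumset_of_finite hA.2.1
    ((finite_setOf_sum_le m).inter_of_left (AddSubmonoid.closure A)) Set.inter_subset_right
  refine ⟨s₀, fun s hs ↦ Set.Subset.antisymm (fun y hy ↦ ?_) fun y ⟨hyΔ, hy⟩ ↦ ?_⟩
  · have hycl := sumset_subset_closure A s hy
    exact ⟨⟨dvd_sum_of_mem_closure (fun a ha ↦ (hA.1 a ha).2) hycl,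
      sum_le_of_mem_sumset (fun a ha ↦ (hA.1 a ha).1) hy⟩, fun h ↦ h.2 hycl⟩
  · obtain hym | hym := le_or_gt (∑ j, y j) m
    · have hycl : y ∈ AddSubmonoid.closure A := not_not.1 fun h ↦ hy ⟨hyΔ.1, h⟩
      exact monotone_sumset hA.2.1 hs (hs₀ ⟨hym, hycl⟩)
    · exact hm y hym s hyΔ

theorem eq_holes_of_forall_ge_sumset_eq (hD : 0 < D) (h0 : 0 ∈ A) {H : Set (Fin d → ℕ)}
    (hH : H ⊆ NatE d e) {s₀ : ℕ} (hs₀ : ∀ s ≥ s₀, sumset A s = DeltaE d D e s \ H) :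
    H = Holes d e A := by
  refine Set.Subset.antisymm (fun y hy ↦ ⟨hH hy, fun hycl ↦ ?_⟩) fun y ⟨hye, hycl⟩ ↦ ?_
  · rw [coe_closure_eq_iUnion_sumset, Set.mem_iUnion] at hycl
    obtain ⟨s, hs⟩ := hycl
    have hmem := monotone_sumset h0 (le_max_right s₀ s) hs
    rw [hs₀ _ (le_max_left s₀ s)] at hmem
    exact hmem.2 hy
  · by_contra hyH
    have hyΔ : y ∈ DeltaE d D e (max s₀ (∑ j, y j)) :=
      ⟨hye, (le_max_right _ _).trans (Nat.le_mul_of_pos_right _ hD)⟩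
    have hmem : y ∈ sumset A (max s₀ (∑ j, y j)) := hs₀ _ (le_max_left _ _) ▸ ⟨hyΔ, hyH⟩
    exact hycl (sumset_subset_closure A _ hmem)

theorem exists_forall_mem_sumset_succ (hD : 0 < D) {H : Set (Fin d → ℕ)} (hH : H.Finite) {s₀ : ℕ}
    (hs₀ : ∀ s ≥ s₀, sumset A s = DeltaE d D e s \ H) :
    ∃ s, ∀ y ∈ DeltaE d D e (s + 1), s * D ≤ ∑ j, y j → y ∈ sumset A (s + 1) := by
  obtain ⟨m, hm⟩ := (hH.image fun y ↦ ∑ j, y j).bddAbove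
  refine ⟨s₀ + m + 1, fun y hyΔ hy ↦ ?_⟩
  rw [hs₀ _ (by omega)]
  refine ⟨hyΔ, fun hyH ↦ ?_⟩
  have := hm (Set.mem_image_of_mem _ hyH)
  have := Nat.le_mul_of_pos_right (s₀ + m + 1) hD
  omega

theorem oneSingType_of_forall_ge_sumset_eq (hD : 0 < D) (hdvd : e ∣ D)
    (h0 : 0 ∈ A) (hle : ∀ a ∈ A, ∑ j, a j ≤ D) {H : Set (Fin d → ℕ)} (hH : H.Finite) {s₀ : ℕ}
    (hs₀ : ∀ s ≥ s₀, sumset A s = DeltaE d D e s \ H) : OneSingType d D e A := by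
  have heD : e ≤ D := Nat.le_of_dvd hD hdvd
  have hA : ∀ a ∈ A, e ∣ ∑ j, a j := fun a ha ↦ by
    have hmem := subset_sumset h0 (Nat.le_add_left 1 s₀) ha
    rw [hs₀ _ (Nat.le_add_right s₀ 1)] at hmem
    exact hmem.1.1
  obtain ⟨s, hs⟩ := exists_forall_mem_sumset_succ hD hH hs₀
  refine ⟨fun a ha ↦ ⟨hle a ha, hA a ha⟩, h0, fun i j ↦ ?_, fun i ↦ ?_⟩
  · have hsum : ∑ k, (Pi.single i (s * D + (D - 1)) + Pi.single j 1 : Fin d → ℕ) k =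
        (s + 1) * D := by
      simp [Finset.sum_add_distrib, add_assoc, Nat.sub_add_cancel hD, add_one_mul]
    exact single_add_single_mem_of_mem_sumset hD hle <|
      hs _ ⟨hsum ▸ hdvd.mul_left _, hsum.le⟩ (hsum ▸ by gcongr; omega)
  · have hsum : ∑ k, (Pi.single i (s * D + (D - e)) : Fin d → ℕ) k = s * D + (D - e) := by simp
    have hmem : Pi.single i (s * D + (D - e)) ∈ sumset A (s + 1) := by
      refine hs _ ⟨?_, ?_⟩ ?_ <;> rw [hsum]
      · exact dvd_add (hdvd.mul_left s) (Nat.dvd_sub hdvd dvd_rfl)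
      · rw [add_one_mul]
        omega
      · omega
    exact single_sub_mem_of_mem_sumset hD hdvd h0 hle hA hmem

end Holes

theorem stmt_14_general (d D e : ℕ) (hD : 0 < D) (hdvd : e ∣ D) (A : Set (Fin d → ℕ))
    (h0 : (0 : Fin d → ℕ) ∈ A) (hle : ∀ a ∈ A, ∑ j, a j ≤ D) :
    ((∀ a ∈ A, e ∣ ∑ j, a j) ∧
      (∀ i j : Fin d, Pi.single i (D - 1) + Pi.single j 1 ∈ A) ∧
      (∀ i : Fin d, Pi.single i (D - e) ∈ A) ∧
      (e = 1 → ∃ j : Fin d, Pi.single j 1 ∉ A))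
    ↔ (∃ H : Set (Fin d → ℕ), H.Finite ∧ H ⊆ NatE d e ∧ (e = 1 → H.Nonempty) ∧
        ∃ s₀ : ℕ, ∀ s ≥ s₀, sumset A s = DeltaE d D e s \ H) := by
  constructor
  · rintro ⟨hA, hA₁, hA₂, hone⟩
    have hAtype : OneSingType d D e A := ⟨fun a ha ↦ ⟨hle a ha, hA a ha⟩, h0, hA₁, hA₂⟩
    refine ⟨Holes d e A, hAtype.finite_holes hD hdvd, Set.sdiff_subset, ?_,
      hAtype.exists_forall_ge_sumset_eq hD hdvd⟩
    rintro rfl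
    exact nonempty_holes_one_iff.2 (hone rfl)
  · rintro ⟨H, hHfin, hH, hone, s₀, hs₀⟩
    obtain ⟨hA, -, hA₁, hA₂⟩ :=
      oneSingType_of_forall_ge_sumset_eq hD hdvd h0 hle hHfin hs₀
    refine ⟨fun a ha ↦ (hA a ha).2, hA₁, hA₂, ?_⟩
    rintro rfl
    obtain rfl := eq_holes_of_forall_ge_sumset_eq hD h0 hH hs₀
    exact nonempty_holes_one_iff.1 (hone rfl)

theorem stmt_14 (d D e : ℕ) (hd : 1 ≤ d) (hD : 2 ≤ D) (he : 1 ≤ e) (heD : e ≤ D)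
    (hdvd : e ∣ D)
    (A : Set (Fin d → ℕ)) (hfin : A.Finite)
    (h0 : (0 : Fin d → ℕ) ∈ A)
    (hDeps : ∀ i : Fin d, Pi.single i D ∈ A)
    (hle : ∀ a ∈ A, ∑ j, a j ≤ D) :
    ((∀ a ∈ A, e ∣ ∑ j, a j) ∧
      (∀ i j : Fin d, Pi.single i (D - 1) + Pi.single j 1 ∈ A) ∧
      (∀ i : Fin d, Pi.single i (D - e) ∈ A) ∧
      (e = 1 → ∃ j : Fin d, Pi.single j 1 ∉ A))
    ↔ (∃ H : Set (Fin d → ℕ), H.Finite ∧ H ⊆ NatE d e ∧ (e = 1 → H.Nonempty) ∧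
        ∃ s₀ : ℕ, ∀ s ≥ s₀, sumset A s = DeltaE d D e s \ H) :=
  stmt_14_general d D e (he.trans heD) hdvd A h0 hle
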